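/- Let l_1, l_2, l_3, l_4 be the vertices of a regular tetrahedron inscribed in the unit sphere S^2 ⊂ E^3 (four unit vectors with ⟨l_i, l_j⟩ = −1/3 for i ≠ j), and for θ ∈ (0, π/2] let C_θ = ⋃_{j=1}^4 C[l_j, θ]. If (1/2)·arccos(−1/3) ≤ θ < arccos(1/3), then σ(C_θ) = 2(1 − cos θ) − 6·A_θ, where A_θ = (1/(2π))·( −arccos( (−1/3 − cos²θ)/sin²θ ) − 2·arccos(√2·cot θ)·cos θ + π ) and σ is the uniform probability measure on S^2. -/

import Mathlib

open Metric Real Set MeasureTheory RealInnerProductSpace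

noncomputable section

/-- The uniform (normalized rotation-invariant) probability measure `σ` on the unit
sphere `S²` in `E³`. -/
def sphereProb : Measure (sphere (0 : EuclideanSpace ℝ (Fin 3)) 1) :=
  ((volume : Measure (EuclideanSpace ℝ (Fin 3))).toSphere Set.univ)⁻¹ •
    (volume : Measure (EuclideanSpace ℝ (Fin 3))).toSphere

/-- The closed spherical cap `C[ξ, θ]` of radius `θ` centered at `ξ`, viewed as a
subset of the unit sphere. -/
def closedCap (ξ : EuclideanSpace ℝ (Fin 3)) (θ : ℝ) :
    Set (sphere (0 : EuclideanSpace ℝ (Fin 3)) 1) :=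
  {y | Real.cos θ ≤ ⟪ξ, (y : EuclideanSpace ℝ (Fin 3))⟫}

/-- The measure `A_θ` of a "lune": the intersection of two caps of radius `θ`
centered at vertices of a regular tetrahedron inscribed in the unit sphere. -/
def luneArea (θ : ℝ) : ℝ :=
  (1 / (2 * Real.pi)) *
    (-Real.arccos ((-(1 / 3) - Real.cos θ ^ 2) / Real.sin θ ^ 2) -
      2 * Real.arccos (Real.sqrt 2 * (Real.cos θ / Real.sin θ)) * Real.cos θ + Real.pi)

/-!
The sum of three vertices of the tetrahedron is a unit vector, so a point in three of the caps would
satisfy `3 * cos θ ≤ 1`. Hence at most two caps overlap at any point, and inclusion–exclusion stops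
after the pairwise intersections: four caps of area `2 * π * (1 - cos θ)` and six congruent lunes.

The great circle equidistant from two centers cuts their lune into two congruent halves. In
spherical coordinates around one of the centers, the circle of colatitude `α` meets the half-lune
in an arc of angle `2 * arccos (tan η * cot α)`, where `2 * η` is the angle between the centers.
Weighted by `sin α`, this arc length has an explicit primitive, which vanishes at `α = η`.
-/

section SphericalCoordinates

open scoped Pointwise

lemma lintegral_lintegral_Ioi_eq_polar {g : ℝ × ℝ → ENNReal} (hg : Measurable g) :
    ∫⁻ z, ∫⁻ ρ in Ioi 0, g (z, ρ) =
      ∫⁻ α in Ioo 0 π, ∫⁻ r in Ioi 0, ENNReal.ofReal r * g (r * cos α, r * sin α) := by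
  have hmeas : MeasurableSet ((univ : Set ℝ) ×ˢ Ioi (0 : ℝ)) :=
    MeasurableSet.univ.prod measurableSet_Ioi
  have mem_iff : ∀ p ∈ polarCoord.target,
      (p.1 * cos p.2, p.1 * sin p.2) ∈ (univ : Set ℝ) ×ˢ Ioi (0 : ℝ) ↔
        p ∈ Ioi (0 : ℝ) ×ˢ Ioo 0 π := by
    rintro ⟨r, α⟩ ⟨hr : 0 < r, hα⟩
    simp only [mem_prod, mem_univ, true_and, mem_Ioi, mem_Ioo, mul_pos_iff_of_pos_left hr, hr]
    refine ⟨fun hsin ↦ ⟨?_, hα.2⟩, fun h ↦ sin_pos_of_mem_Ioo h⟩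
    exact lt_of_not_ge fun hα0 ↦ hsin.not_ge (sin_nonpos_of_nonpos_of_neg_pi_le hα0 hα.1.le)
  have integrand_eq : ∀ p ∈ polarCoord.target, ENNReal.ofReal p.1 *
        ((univ : Set ℝ) ×ˢ Ioi (0 : ℝ)).indicator g (p.1 * cos p.2, p.1 * sin p.2) =
      (Ioi (0 : ℝ) ×ˢ Ioo 0 π).indicator
        (fun p ↦ ENNReal.ofReal p.1 * g (p.1 * cos p.2, p.1 * sin p.2)) p := by
    intro p hp
    by_cases h : p ∈ Ioi (0 : ℝ) ×ˢ Ioo 0 π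
    · rw [indicator_of_mem h, indicator_of_mem ((mem_iff p hp).2 h)]
    · rw [indicator_of_notMem h, indicator_of_notMem (mt (mem_iff p hp).1 h), mul_zero]
  have subset_target : Ioi (0 : ℝ) ×ˢ Ioo 0 π ⊆ polarCoord.target :=
    prod_mono_right (Ioo_subset_Ioo_left (neg_nonpos.2 pi_pos.le))
  calc ∫⁻ z, ∫⁻ ρ in Ioi 0, g (z, ρ)
      = ∫⁻ p, ((univ : Set ℝ) ×ˢ Ioi (0 : ℝ)).indicator g p := by
        rw [lintegral_indicator hmeas, Measure.volume_eq_prod, setLIntegral_prod _ hg.aemeasurable,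
          Measure.restrict_univ]
    _ = ∫⁻ p in Ioi (0 : ℝ) ×ˢ Ioo 0 π,
          ENNReal.ofReal p.1 * g (p.1 * cos p.2, p.1 * sin p.2) := by
        rw [← lintegral_comp_polarCoord_symm]
        refine (setLIntegral_congr_fun polarCoord.open_target.measurableSet integrand_eq).trans ?_
        rw [lintegral_indicator (measurableSet_Ioi.prod measurableSet_Ioo),
          Measure.restrict_restrict_of_subset subset_target]
    _ = ∫⁻ α in Ioo 0 π, ∫⁻ r in Ioi 0, ENNReal.ofReal r * g (r * cos α, r * sin α) := by
        rw [Measure.volume_eq_prod, setLIntegral_prod_symm _ (by fun_prop)]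

lemma lintegral_eq_cylindrical {f : ℝ × ℝ × ℝ → ENNReal} (hf : Measurable f) :
    ∫⁻ q, f q = ∫⁻ z, ∫⁻ ρ in Ioi 0, ∫⁻ φ in Ioo (-π) π,
      ENNReal.ofReal ρ * f (z, ρ * cos φ, ρ * sin φ) := by
  rw [Measure.volume_eq_prod, lintegral_prod _ hf.aemeasurable]
  refine lintegral_congr fun z ↦ ?_
  rw [← lintegral_comp_polarCoord_symm, polarCoord_target, Measure.volume_eq_prod,
    setLIntegral_prod _ ?_]
  · rfl
  · exact (measurable_fst.ennreal_ofReal.mul <| hf.comp <| measurable_const.prodMk <|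
      continuous_polarCoord_symm.measurable).aemeasurable

lemma lintegral_eq_spherical {f : ℝ × ℝ × ℝ → ENNReal} (hf : Measurable f) :
    ∫⁻ q, f q = ∫⁻ α in Ioo 0 π, ∫⁻ r in Ioi 0, ENNReal.ofReal r * ∫⁻ φ in Ioo (-π) π,
      ENNReal.ofReal (r * sin α) *
        f (r * cos α, r * sin α * cos φ, r * sin α * sin φ) := by
  rw [lintegral_eq_cylindrical hf]
  refine lintegral_lintegral_Ioi_eq_polar (g := fun p ↦ ∫⁻ φ in Ioo (-π) π,
    ENNReal.ofReal p.2 * f (p.1, p.2 * cos φ, p.2 * sin φ)) ?_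
  exact Measurable.lintegral_prod_right' (f := fun q : (ℝ × ℝ) × ℝ ↦
    ENNReal.ofReal q.1.2 * f (q.1.1, q.1.2 * cos q.2, q.1.2 * sin q.2)) (by fun_prop)

variable {E : Type*} [NormedAddCommGroup E] [InnerProductSpace ℝ E]

/-- The point of the unit sphere with colatitude `α` (angle to the pole `b 0`) and longitude `φ`
(measured from the direction `b 1`). -/
def sphericalPoint (b : OrthonormalBasis (Fin 3) ℝ E) (α φ : ℝ) : sphere (0 : E) 1 :=
  ⟨b.repr.symm !₂[cos α, sin α * cos φ, sin α * sin φ], by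
    rw [mem_sphere_zero_iff_norm, LinearIsometryEquiv.norm_map, EuclideanSpace.norm_eq,
      sqrt_eq_one]
    simp only [Fin.sum_univ_three, norm_eq_abs, sq_abs]
    change cos α ^ 2 + (sin α * cos φ) ^ 2 + (sin α * sin φ) ^ 2 = 1
    linear_combination sin_sq_add_cos_sq α + sin α ^ 2 * sin_sq_add_cos_sq φ⟩

variable (b : OrthonormalBasis (Fin 3) ℝ E)

lemma inner_sphericalPoint_zero (α φ : ℝ) : ⟪b 0, (sphericalPoint b α φ : E)⟫ = cos α := by
  simp [← b.repr_apply_apply, sphericalPoint]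

lemma inner_sphericalPoint_one (α φ : ℝ) :
    ⟪b 1, (sphericalPoint b α φ : E)⟫ = sin α * cos φ := by
  simp [← b.repr_apply_apply, sphericalPoint]

lemma smul_sphericalPoint (r α φ : ℝ) : r • (sphericalPoint b α φ : E) =
    b.repr.symm !₂[r * cos α, r * sin α * cos φ, r * sin α * sin φ] := by
  rw [sphericalPoint, ← map_smul]
  congr 1
  ext i
  fin_cases i <;> simp [mul_assoc]

lemma continuous_sphericalPoint : Continuous fun p : ℝ × ℝ ↦ sphericalPoint b p.1 p.2 := by
  refine Continuous.subtype_mk (b.repr.symm.continuous.comp ?_) _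
  refine (PiLp.continuous_toLp 2 _).comp (continuous_pi fun i ↦ ?_)
  fin_cases i
  · exact continuous_cos.comp continuous_fst
  · exact (continuous_sin.comp continuous_fst).mul (continuous_cos.comp continuous_snd)
  · exact (continuous_sin.comp continuous_fst).mul (continuous_sin.comp continuous_snd)

lemma smul_mem_Ioo_smul_image_iff {s : Set (sphere (0 : E) 1)} {r : ℝ} (hr : 0 < r)
    (y : sphere (0 : E) 1) :
    r • (y : E) ∈ (Ioo (0 : ℝ) 1 • ((↑) '' s : Set E) : Set E) ↔ r < 1 ∧ y ∈ s := by
  constructor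
  · rintro ⟨t, ht, _, ⟨z, hz, rfl⟩, htz⟩
    have norm_smul_eq : ∀ {c : ℝ} (w : sphere (0 : E) 1), 0 < c → ‖c • (w : E)‖ = c := by
      intro c w hc
      rw [norm_smul, norm_eq_of_mem_sphere, mul_one, norm_of_nonneg hc.le]
    obtain rfl : t = r := by
      rw [← norm_smul_eq z ht.1, ← norm_smul_eq y hr]
      exact congrArg norm htz
    obtain rfl : z = y := Subtype.ext (smul_right_injective E hr.ne' htz)
    exact ⟨ht.2, hz⟩
  · rintro ⟨hr1, hy⟩
    exact smul_mem_smul ⟨hr, hr1⟩ (mem_image_of_mem _ hy)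

variable [MeasurableSpace E] [BorelSpace E]

lemma measurableSet_Ioo_smul_image {s : Set (sphere (0 : E) 1)} (hs : MeasurableSet s) :
    MeasurableSet (Ioo (0 : ℝ) 1 • ((↑) '' s : Set E) : Set E) := by
  have hemb : MeasurableEmbedding fun p : sphere (0 : E) 1 × Ioi (0 : ℝ) ↦ (p.2 : ℝ) • (p.1 : E) :=
    (MeasurableEmbedding.subtype_coe (measurableSet_singleton (0 : E)).compl).comp
      (homeomorphUnitSphereProd E).symm.measurableEmbedding
  have cone_subset : (Ioo (0 : ℝ) 1 • ((↑) '' s : Set E) : Set E) ⊆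
      range fun p : sphere (0 : E) 1 × Ioi (0 : ℝ) ↦ (p.2 : ℝ) • (p.1 : E) := by
    rintro _ ⟨r, hr, _, ⟨y, -, rfl⟩, rfl⟩
    exact ⟨(y, ⟨r, hr.1⟩), rfl⟩
  have preimage_eq : (fun p : sphere (0 : E) 1 × Ioi (0 : ℝ) ↦ (p.2 : ℝ) • (p.1 : E)) ⁻¹'
      (Ioo (0 : ℝ) 1 • ((↑) '' s : Set E)) = s ×ˢ ((↑) ⁻¹' Iio (1 : ℝ)) := by
    ext ⟨y, r, hr⟩
    exact (smul_mem_Ioo_smul_image_iff hr y).trans and_comm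
  rw [← inter_eq_left.2 cone_subset, ← hemb.measurableSet_preimage, preimage_eq]
  exact hs.prod (measurable_subtype_coe measurableSet_Iio)

lemma lintegral_indicator_Ioo_smul_image {s : Set (sphere (0 : E) 1)} (hs : MeasurableSet s)
    (α : ℝ) {r : ℝ} (hr : 0 < r) :
    ∫⁻ φ in Ioo (-π) π, (Ioo (0 : ℝ) 1 • ((↑) '' s : Set E)).indicator 1
        (r • (sphericalPoint b α φ : E)) =
      (Iio (1 : ℝ)).indicator
        (fun _ ↦ volume {φ ∈ Ioo (-π) π | sphericalPoint b α φ ∈ s}) r := by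
  have hslice : MeasurableSet {φ | sphericalPoint b α φ ∈ s} :=
    ((continuous_sphericalPoint b).comp (Continuous.prodMk_right α)).measurable hs
  by_cases hr1 : r < 1
  · have integrand_eq : ∀ φ, (Ioo (0 : ℝ) 1 • ((↑) '' s : Set E)).indicator (1 : E → ENNReal)
        (r • (sphericalPoint b α φ : E)) = {φ | sphericalPoint b α φ ∈ s}.indicator 1 φ :=
      fun φ ↦ by
        by_cases hφ : sphericalPoint b α φ ∈ s <;> simp [smul_mem_Ioo_smul_image_iff hr, hr1, hφ]
    simp only [integrand_eq]
    rw [lintegral_indicator_one hslice, Measure.restrict_apply hslice, inter_comm,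
      indicator_of_mem (mem_Iio.2 hr1)]
    rfl
  · simp [smul_mem_Ioo_smul_image_iff hr, hr1]

variable [FiniteDimensional ℝ E]

lemma measurePreserving_orthonormalBasis_repr_symm_fin_three : MeasurePreserving
    (fun q : ℝ × ℝ × ℝ ↦ b.repr.symm !₂[q.1, q.2.1, q.2.2]) volume volume := by
  refine b.measurePreserving_repr_symm.comp ((PiLp.volume_preserving_toLp (Fin 3)).comp ?_)
  have split_zero := (volume_preserving_piFinSuccAbove (fun _ : Fin 3 ↦ ℝ) 0).symm
  have split_one := (MeasurePreserving.id (volume : Measure ℝ)).prod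
    (volume_preserving_finTwoArrow ℝ).symm
  convert! split_zero.comp split_one using 1
  ext q i
  fin_cases i <;> rfl

lemma lintegral_eq_lintegral_sphericalPoint {f : E → ENNReal} (hf : Measurable f) :
    ∫⁻ x, f x = ∫⁻ α in Ioo 0 π, ∫⁻ r in Ioi 0, ENNReal.ofReal r * ∫⁻ φ in Ioo (-π) π,
      ENNReal.ofReal (r * sin α) * f (r • (sphericalPoint b α φ : E)) := by
  have hcoord := measurePreserving_orthonormalBasis_repr_symm_fin_three b
  simp only [smul_sphericalPoint, ← hcoord.lintegral_comp hf]
  exact lintegral_eq_spherical (hf.comp hcoord.measurable)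

lemma lintegral_Ioo_ofReal_sq : ∫⁻ r in Ioo (0 : ℝ) 1, ENNReal.ofReal (r ^ 2) = 3⁻¹ := by
  rw [restrict_Ioo_eq_restrict_Ioc, ← ofReal_integral_eq_lintegral_ofReal
    (continuous_pow 2).integrableOn_Ioc (.of_forall fun r ↦ sq_nonneg r),
    ← intervalIntegral.integral_of_le zero_le_one, integral_pow]
  norm_num [ENNReal.ofReal_div_of_pos]

lemma toSphere_eq_lintegral {s : Set (sphere (0 : E) 1)} (hs : MeasurableSet s) :
    (volume : Measure E).toSphere s = ∫⁻ α in Ioo 0 π, ENNReal.ofReal (sin α) *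
      volume {φ ∈ Ioo (-π) π | sphericalPoint b α φ ∈ s} := by
  set slice : ℝ → ENNReal := fun α ↦ volume {φ ∈ Ioo (-π) π | sphericalPoint b α φ ∈ s}
  have hcone := measurableSet_Ioo_smul_image hs
  have radial (α : ℝ) : ∫⁻ r in Ioi 0, ENNReal.ofReal r * ∫⁻ φ in Ioo (-π) π,
        ENNReal.ofReal (r * sin α) * (Ioo (0 : ℝ) 1 • ((↑) '' s : Set E)).indicator 1
          (r • (sphericalPoint b α φ : E)) =
      3⁻¹ * (ENNReal.ofReal (sin α) * slice α) := by
    calc _ = ∫⁻ r in Ioi (0 : ℝ), (Iio (1 : ℝ)).indicator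
            (fun r ↦ ENNReal.ofReal (r ^ 2) * (ENNReal.ofReal (sin α) * slice α)) r := by
          refine setLIntegral_congr_fun measurableSet_Ioi fun r (hr : 0 < r) ↦ ?_
          simp only [lintegral_const_mul' _ _ ENNReal.ofReal_ne_top,
            lintegral_indicator_Ioo_smul_image b hs α hr, indicator_apply, mul_ite, mul_zero,
            ENNReal.ofReal_mul hr.le, sq, mul_assoc, slice]
      _ = 3⁻¹ * (ENNReal.ofReal (sin α) * slice α) := by
          rw [setLIntegral_indicator measurableSet_Iio, inter_comm, Ioi_inter_Iio,
            lintegral_mul_const _ (by fun_prop), lintegral_Ioo_ofReal_sq]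
  rw [Measure.toSphere_apply' _ hs, ← lintegral_indicator_one hcone,
    lintegral_eq_lintegral_sphericalPoint b (measurable_one.indicator hcone)]
  simp only [radial]
  rw [lintegral_const_mul' _ _ (by simp), ← mul_assoc, Module.finrank_eq_card_basis b.toBasis,
    Fintype.card_fin, Nat.cast_ofNat,
    ENNReal.mul_inv_cancel three_ne_zero ENNReal.ofNat_ne_top, one_mul]

lemma toSphere_real_eq_integral {s : Set (sphere (0 : E) 1)} (hs : MeasurableSet s) :
    (volume : Measure E).toSphere.real s = ∫ α in Ioo 0 π, sin α *
      volume.real {φ ∈ Ioo (-π) π | sphericalPoint b α φ ∈ s} := by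
  have hslice : Measurable fun α ↦ volume {φ ∈ Ioo (-π) π | sphericalPoint b α φ ∈ s} :=
    measurable_measure_prodMk_left
      (s := {p : ℝ × ℝ | p.2 ∈ Ioo (-π) π ∧ sphericalPoint b p.1 p.2 ∈ s})
      ((measurable_snd measurableSet_Ioo).inter ((continuous_sphericalPoint b).measurable hs))
  have hfin : ∀ α, volume {φ ∈ Ioo (-π) π | sphericalPoint b α φ ∈ s} < ⊤ := fun α ↦
    (measure_mono (sep_subset _ _)).trans_lt measure_Ioo_lt_top
  rw [measureReal_def, toSphere_eq_lintegral b hs, ← integral_toReal]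
  · refine setIntegral_congr_fun measurableSet_Ioo fun α hα ↦ ?_
    simp only [ENNReal.toReal_mul, measureReal_def,
      ENNReal.toReal_ofReal (sin_pos_of_mem_Ioo hα).le]
  · fun_prop
  · exact .of_forall fun α ↦ ENNReal.mul_lt_top ENNReal.ofReal_lt_top (hfin α)

end SphericalCoordinates

section CapsAndHalfLunes

lemma le_cos_iff_le_arccos {t x : ℝ} (ht : t ≤ 1) (hx : x ∈ Icc 0 π) :
    t ≤ cos x ↔ x ≤ arccos t := by
  constructor <;> intro h
  · simpa only [arccos_cos hx.1 hx.2] using arccos_le_arccos h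
  · rcases le_or_gt t (-1) with ht' | ht'
    · exact ht'.trans (neg_one_le_cos x)
    · simpa only [cos_arccos ht'.le ht] using
        cos_le_cos_of_nonneg_of_le_pi hx.1 (arccos_le_pi t) h

lemma lt_cos_of_lt_arccos {t x : ℝ} (hx : 0 ≤ x) (h : x < arccos t) : t < cos x := by
  have ht : t < 1 := arccos_pos.1 (hx.trans_lt h)
  have hxπ : x ≤ π := h.le.trans (arccos_le_pi t)
  refine ((le_cos_iff_le_arccos ht.le ⟨hx, hxπ⟩).2 h.le).lt_of_ne ?_
  rintro rfl
  exact h.ne (arccos_cos hx hxπ).symm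

lemma volume_real_Ioo_inter_le_cos (t : ℝ) :
    volume.real {φ ∈ Ioo (-π) π | t ≤ cos φ} = 2 * arccos t := by
  rcases lt_or_ge 1 t with ht | ht
  · have arc_eq : {φ ∈ Ioo (-π) π | t ≤ cos φ} = ∅ :=
      eq_empty_of_forall_notMem fun φ hφ ↦ (hφ.2.trans (cos_le_one φ)).not_gt ht
    rw [arc_eq, measureReal_empty, arccos_of_one_le ht.le, mul_zero]
  have arc_eq : {φ ∈ Icc (-π) π | t ≤ cos φ} = Icc (-arccos t) (arccos t) := by
    ext φ
    rw [mem_ofPred_eq, mem_Icc, mem_Icc, ← abs_le, ← abs_le, ← cos_abs]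
    refine ⟨fun h ↦ (le_cos_iff_le_arccos ht ⟨abs_nonneg φ, h.1⟩).1 h.2, fun h ↦ ?_⟩
    have hφ : |φ| ≤ π := h.trans (arccos_le_pi t)
    exact ⟨hφ, (le_cos_iff_le_arccos ht ⟨abs_nonneg φ, hφ⟩).2 h⟩
  calc volume.real {φ ∈ Ioo (-π) π | t ≤ cos φ}
      = volume.real {φ ∈ Icc (-π) π | t ≤ cos φ} :=
        measureReal_congr (Ioo_ae_eq_Icc.inter (ae_eq_refl _))
    _ = 2 * arccos t := by
        rw [arc_eq, volume_real_Icc_of_le (neg_le_self (arccos_nonneg t))]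
        ring

variable {E : Type*} [NormedAddCommGroup E] [InnerProductSpace ℝ E] [MeasurableSpace E]
  [BorelSpace E] [FiniteDimensional ℝ E] (b : OrthonormalBasis (Fin 3) ℝ E)

lemma toSphere_real_cap_inter_eq_integral {s : Set (sphere (0 : E) 1)} (hs : MeasurableSet s)
    {θ : ℝ} (hθ : θ ∈ Icc 0 π) :
    (volume : Measure E).toSphere.real ({y | cos θ ≤ ⟪b 0, (y : E)⟫} ∩ s) =
      ∫ α in 0..θ, sin α * volume.real {φ ∈ Ioo (-π) π | sphericalPoint b α φ ∈ s} := by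
  have hcap : MeasurableSet {y : sphere (0 : E) 1 | cos θ ≤ ⟪b 0, (y : E)⟫} :=
    measurableSet_le measurable_const (by fun_prop)
  rw [toSphere_real_eq_integral b (hcap.inter hs), ← integral_Ioc_eq_integral_Ioo,
    intervalIntegral.integral_of_le hθ.1,
    setIntegral_eq_of_subset_of_forall_sdiff_eq_zero measurableSet_Ioc (Ioc_subset_Ioc_right hθ.2)]
  · refine setIntegral_congr_fun measurableSet_Ioc fun α hα ↦ ?_
    have hcos : cos θ ≤ cos α := cos_le_cos_of_nonneg_of_le_pi hα.1.le hθ.2 hα.2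
    simp only [mem_inter_iff, mem_ofPred_eq, inner_sphericalPoint_zero, hcos, true_and]
  · rintro α ⟨hα, hαθ⟩
    have hcos : cos α < cos θ :=
      cos_lt_cos_of_nonneg_of_le_pi hθ.1 hα.2 (lt_of_not_ge fun h ↦ hαθ ⟨hα.1, h⟩)
    simp only [mem_inter_iff, mem_ofPred_eq, inner_sphericalPoint_zero, hcos.not_ge, false_and,
      and_false, ofPred_false, measureReal_empty, mul_zero]

lemma toSphere_real_cap {θ : ℝ} (hθ : θ ∈ Icc 0 π) :
    (volume : Measure E).toSphere.real {y | cos θ ≤ ⟪b 0, (y : E)⟫} = 2 * π * (1 - cos θ) := by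
  rw [← inter_univ {y : sphere (0 : E) 1 | _},
    toSphere_real_cap_inter_eq_integral b MeasurableSet.univ hθ]
  simp only [mem_univ, and_true, ofPred_mem_eq, volume_real_Ioo_of_le (neg_le_self pi_pos.le),
    intervalIntegral.integral_mul_const, integral_sin, cos_zero]
  ring

lemma toSphere_real_halfLune_eq_integral {η θ : ℝ} (hη : 0 < cos η)
    (hθ : θ ∈ Ico 0 π) :
    (volume : Measure E).toSphere.real ({y | cos θ ≤ ⟪b 0, (y : E)⟫} ∩
        {y | sin η * ⟪b 0, (y : E)⟫ ≤ cos η * ⟪b 1, (y : E)⟫}) =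
      ∫ α in 0..θ, sin α * (2 * arccos (tan η * (cos α / sin α))) := by
  rw [toSphere_real_cap_inter_eq_integral b (measurableSet_le (by fun_prop) (by fun_prop))
    ⟨hθ.1, hθ.2.le⟩]
  refine intervalIntegral.integral_congr_ae (.of_forall fun α hα ↦ ?_)
  rw [uIoc_of_le hθ.1] at hα
  have hsinα : 0 < sin α := sin_pos_of_mem_Ioo ⟨hα.1, hα.2.trans_lt hθ.2⟩
  have slice_iff (φ : ℝ) : sin η * cos α ≤ cos η * (sin α * cos φ) ↔
      tan η * (cos α / sin α) ≤ cos φ := by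
    rw [tan_eq_sin_div_cos, div_mul_div_comm, div_le_iff₀ (mul_pos hη hsinα), mul_comm (cos φ),
      mul_assoc]
  simp only [mem_ofPred_eq, inner_sphericalPoint_zero, inner_sphericalPoint_one, slice_iff,
    volume_real_Ioo_inter_le_cos]

end CapsAndHalfLunes

section HalfLuneArea

/-- The area of a half-lune: the part of a spherical cap of radius `θ` cut off by a great circle at
spherical distance `η` from the center of the cap. This is meaningful for `0 < η < π / 2` and
`η ≤ θ ≤ π - η`. -/
def halfLuneArea (η θ : ℝ) : ℝ :=
  2 * arccos (sin η / sin θ) - 2 * cos θ * arccos (tan η * (cos θ / sin θ))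

variable {η : ℝ}

lemma hasDerivAt_halfLuneArea {α : ℝ} (hη : 0 < cos η) (hα : 0 < sin α)
    (hcos : cos α ^ 2 < cos η ^ 2) :
    HasDerivAt (halfLuneArea η) (sin α * (2 * arccos (tan η * (cos α / sin α)))) α := by
  set u := √(cos η ^ 2 - cos α ^ 2)
  have hu : 0 < u := sqrt_pos.2 (sub_pos.2 hcos)
  have hu_sq : u ^ 2 = cos η ^ 2 - cos α ^ 2 := sq_sqrt (sub_pos.2 hcos).le
  have one_sub_sq_sin_div : 1 - (sin η / sin α) ^ 2 = (u / sin α) ^ 2 := by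
    field_simp
    linear_combination sin_sq_add_cos_sq α - sin_sq_add_cos_sq η - hu_sq
  have one_sub_sq_tan_mul : 1 - (tan η * (cos α / sin α)) ^ 2 = (u / (cos η * sin α)) ^ 2 := by
    rw [tan_eq_sin_div_cos]
    field_simp
    linear_combination
      cos η ^ 2 * sin_sq_add_cos_sq α - cos α ^ 2 * sin_sq_add_cos_sq η - hu_sq
  have ne_neg_one_and_ne_one {x v : ℝ} (hv : 0 < v) (h : 1 - x ^ 2 = v ^ 2) :
      x ≠ -1 ∧ x ≠ 1 := by
    constructor <;> rintro rfl <;> nlinarith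
  have sin_div_ne := ne_neg_one_and_ne_one (by positivity) one_sub_sq_sin_div
  have tan_mul_ne := ne_neg_one_and_ne_one (by positivity) one_sub_sq_tan_mul
  have deriv_sin_div : HasDerivAt (fun x ↦ sin η / sin x) (-(sin η * cos α / sin α ^ 2)) α := by
    simpa [neg_div] using! (hasDerivAt_const α (sin η)).div (hasDerivAt_sin α) hα.ne'
  have deriv_tan_mul : HasDerivAt (fun x ↦ tan η * (cos x / sin x)) (-(tan η / sin α ^ 2)) α := by
    refine (((hasDerivAt_cos α).div (hasDerivAt_sin α) hα.ne').const_mul (tan η)).congr_deriv ?_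
    linear_combination -(tan η / sin α ^ 2) * sin_sq_add_cos_sq α
  have deriv_arccos_sin := (hasDerivAt_arccos sin_div_ne.1 sin_div_ne.2).comp α deriv_sin_div
  have deriv_arccos_tan := (hasDerivAt_arccos tan_mul_ne.1 tan_mul_ne.2).comp α deriv_tan_mul
  -- The inner derivatives contribute `± 2 * sin η * cos α / (u * sin α)`, which cancel.
  refine ((deriv_arccos_sin.const_mul 2).sub
    (((hasDerivAt_cos α).const_mul 2).mul deriv_arccos_tan)).congr_deriv ?_
  rw [one_sub_sq_sin_div, one_sub_sq_tan_mul, sqrt_sq (by positivity), sqrt_sq (by positivity),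
    tan_eq_sin_div_cos]
  simp only [Function.comp_apply]
  field_simp
  ring

lemma continuousOn_halfLuneArea : ContinuousOn (halfLuneArea η) (Ioo 0 π) := by
  have hsin : ∀ α ∈ Ioo 0 π, sin α ≠ 0 := fun α hα ↦ (sin_pos_of_mem_Ioo hα).ne'
  unfold halfLuneArea
  fun_prop (disch := assumption)

lemma halfLuneArea_self (hη : η ∈ Ioo 0 (π / 2)) : halfLuneArea η η = 0 := by
  have hsin : sin η ≠ 0 := (sin_pos_of_mem_Ioo ⟨hη.1, by linarith [hη.2, pi_pos]⟩).ne'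
  have hcos : cos η ≠ 0 := (cos_pos_of_mem_Ioo ⟨by linarith [hη.1, pi_pos], hη.2⟩).ne'
  rw [halfLuneArea, tan_eq_sin_div_cos, div_self hsin, div_mul_div_cancel₀ hcos, div_self hsin,
    arccos_one]
  ring

lemma arccos_tan_mul_cot_eq_zero {α : ℝ} (hη : η < π / 2) (hα : α ∈ Ioc 0 η) :
    arccos (tan η * (cos α / sin α)) = 0 := by
  have hsinα : 0 < sin α := sin_pos_of_mem_Ioo ⟨hα.1, by linarith [hα.2, pi_pos]⟩
  have hcosη : 0 < cos η := cos_pos_of_mem_Ioo ⟨by linarith [hα.1, hα.2, pi_pos], hη⟩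
  have hdiff : 0 ≤ sin (η - α) :=
    sin_nonneg_of_mem_Icc ⟨by linarith [hα.2], by linarith [hα.1, pi_pos]⟩
  rw [sin_sub] at hdiff
  rw [arccos_eq_zero, tan_eq_sin_div_cos, div_mul_div_comm, one_le_div (by positivity)]
  linarith

lemma cos_sq_lt_cos_sq {α : ℝ} (hη : 0 ≤ η) (hα : α ∈ Ioo η (π - η)) :
    cos α ^ 2 < cos η ^ 2 := by
  refine sq_lt_sq' ?_ (cos_lt_cos_of_nonneg_of_le_pi hη (by linarith [hα.2]) hα.1)
  rw [← cos_pi_sub]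
  exact cos_lt_cos_of_nonneg_of_le_pi (hη.trans hα.1.le) (sub_le_self π hη) hα.2

lemma integral_sin_mul_arccos_eq_halfLuneArea {θ : ℝ} (hη : η ∈ Ioo 0 (π / 2))
    (hθ : θ ∈ Icc η (π - η)) :
    ∫ α in 0..θ, sin α * (2 * arccos (tan η * (cos α / sin α))) = halfLuneArea η θ := by
  have hcosη : 0 < cos η := cos_pos_of_mem_Ioo ⟨by linarith [hη.1, pi_pos], hη.2⟩
  have Icc_subset : Icc η θ ⊆ Ioo 0 π :=
    Icc_subset_Ioo hη.1 (hθ.2.trans_lt (sub_lt_self π hη.1))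
  have hsin : ∀ α ∈ Icc η θ, sin α ≠ 0 := fun α hα ↦ (sin_pos_of_mem_Ioo (Icc_subset hα)).ne'
  have deriv_eq : ∀ α ∈ Ioo η θ,
      HasDerivAt (halfLuneArea η) (sin α * (2 * arccos (tan η * (cos α / sin α)))) α :=
    fun α hα ↦ hasDerivAt_halfLuneArea hcosη
      (sin_pos_of_mem_Ioo (Icc_subset (Ioo_subset_Icc_self hα)))
      (cos_sq_lt_cos_sq hη.1.le ⟨hα.1, hα.2.trans_le hθ.2⟩)
  have integrable : IntervalIntegrable
      (fun α ↦ sin α * (2 * arccos (tan η * (cos α / sin α)))) volume η θ :=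
    ContinuousOn.intervalIntegrable_of_Icc hθ.1 (by fun_prop (disch := assumption))
  calc ∫ α in 0..θ, sin α * (2 * arccos (tan η * (cos α / sin α)))
      = ∫ α in η..θ, sin α * (2 * arccos (tan η * (cos α / sin α))) := by
        rw [intervalIntegral.integral_of_le (hη.1.le.trans hθ.1),
          intervalIntegral.integral_of_le hθ.1]
        refine setIntegral_eq_of_subset_of_forall_sdiff_eq_zero measurableSet_Ioc
          (Ioc_subset_Ioc_left hη.1.le) ?_
        rintro α ⟨hα, hαη⟩
        have hα' : α ∈ Ioc 0 η := ⟨hα.1, le_of_not_gt fun h ↦ hαη ⟨h, hα.2⟩⟩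
        rw [arccos_tan_mul_cot_eq_zero hη.2 hα', mul_zero, mul_zero]
    _ = halfLuneArea η θ - halfLuneArea η η :=
        intervalIntegral.integral_eq_sub_of_hasDerivAt_of_le hθ.1
          (continuousOn_halfLuneArea.mono Icc_subset) deriv_eq integrable
    _ = halfLuneArea η θ := by rw [halfLuneArea_self hη, sub_zero]

end HalfLuneArea

section Frames

variable {E : Type*} [NormedAddCommGroup E] [InnerProductSpace ℝ E] [FiniteDimensional ℝ E]

lemma exists_orthonormalBasis_zero_eq (hE : Module.finrank ℝ E = 3) {a : E} (ha : ‖a‖ = 1) :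
    ∃ b : OrthonormalBasis (Fin 3) ℝ E, b 0 = a := by
  have orthonormal : Orthonormal ℝ (({0} : Set (Fin 3)).domRestrict fun _ ↦ a) :=
    ⟨fun _ ↦ ha, fun i j hij ↦ absurd (Subsingleton.elim i j) hij⟩
  obtain ⟨b, hb⟩ := orthonormal.exists_orthonormalBasis_extension_of_card_eq (by simpa using hE)
  exact ⟨b, hb 0 rfl⟩

lemma exists_orthonormalBasis_zero_eq_one_eq (hE : Module.finrank ℝ E = 3) {a e : E}
    (ha : ‖a‖ = 1) (he : ‖e‖ = 1) (hae : ⟪a, e⟫ = 0) :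
    ∃ b : OrthonormalBasis (Fin 3) ℝ E, b 0 = a ∧ b 1 = e := by
  have orthonormal : Orthonormal ℝ (({0, 1} : Set (Fin 3)).domRestrict ![a, e, 0]) := by
    constructor
    · rintro ⟨i, rfl | rfl⟩
      exacts [ha, he]
    · rintro ⟨i, rfl | rfl⟩ ⟨j, rfl | rfl⟩ hij
      exacts [absurd rfl hij, hae, (real_inner_comm a e).trans hae, absurd rfl hij]
  obtain ⟨b, hb⟩ := orthonormal.exists_orthonormalBasis_extension_of_card_eq (by simpa using hE)
  exact ⟨b, hb 0 (.inl rfl), hb 1 (.inr rfl)⟩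

lemma exists_orthonormalBasis_eq_cos_smul_add_sin_smul (hE : Module.finrank ℝ E = 3) {a a' : E}
    {δ : ℝ} (ha : ‖a‖ = 1) (ha' : ‖a'‖ = 1) (hδ : sin δ ≠ 0) (haa' : ⟪a, a'⟫ = cos δ) :
    ∃ b : OrthonormalBasis (Fin 3) ℝ E, b 0 = a ∧ a' = cos δ • b 0 + sin δ • b 1 := by
  have haa : ⟪a, a⟫ = 1 := by rw [real_inner_self_eq_norm_sq, ha, one_pow]
  have norm_sq : ‖a' - cos δ • a‖ ^ 2 = sin δ ^ 2 := by
    rw [norm_sub_sq_real, inner_smul_right, real_inner_comm, haa', norm_smul, ha, ha', mul_one,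
      norm_eq_abs, sq_abs]
    linear_combination -sin_sq_add_cos_sq δ
  have norm_eq_one : ‖(sin δ)⁻¹ • (a' - cos δ • a)‖ = 1 := by
    rw [← pow_eq_one_iff_of_nonneg (norm_nonneg _) two_ne_zero, norm_smul, mul_pow, norm_sq,
      norm_eq_abs, sq_abs, ← mul_pow, inv_mul_cancel₀ hδ, one_pow]
  have inner_eq_zero : ⟪a, (sin δ)⁻¹ • (a' - cos δ • a)⟫ = 0 := by
    rw [inner_smul_right, inner_sub_right, inner_smul_right, haa', haa, mul_one, sub_self, mul_zero]
  obtain ⟨b, hb₀, hb₁⟩ := exists_orthonormalBasis_zero_eq_one_eq hE ha norm_eq_one inner_eq_zero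
  refine ⟨b, hb₀, ?_⟩
  rw [hb₀, hb₁, smul_inv_smul₀ hδ, add_sub_cancel]

end Frames

section Lunes

open scoped Pointwise

variable {E : Type*} [NormedAddCommGroup E] [InnerProductSpace ℝ E] [MeasurableSpace E]
  [BorelSpace E] [FiniteDimensional ℝ E]

lemma toSphere_setOf_inner_eq_zero {v : E} (hv : v ≠ 0) :
    (volume : Measure E).toSphere {y | ⟪v, (y : E)⟫ = 0} = 0 := by
  have hmeas : MeasurableSet {y : sphere (0 : E) 1 | ⟪v, (y : E)⟫ = 0} :=
    measurableSet_eq_fun (by fun_prop) measurable_const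
  have cone_subset : (Ioo (0 : ℝ) 1 • ((↑) '' {y : sphere (0 : E) 1 | ⟪v, (y : E)⟫ = 0}) : Set E) ⊆
      (ℝ ∙ v)ᗮ := by
    rintro _ ⟨r, -, _, ⟨y, hy, rfl⟩, rfl⟩
    exact Submodule.smul_mem _ r (Submodule.mem_orthogonal_singleton_iff_inner_right.2 hy)
  have orthogonal_ne_top : (ℝ ∙ v)ᗮ ≠ ⊤ := by
    rwa [Ne, Submodule.orthogonal_eq_top_iff, Submodule.span_singleton_eq_bot]
  rw [Measure.toSphere_apply' _ hmeas,
    measure_mono_null cone_subset (Measure.addHaar_submodule _ _ orthogonal_ne_top), mul_zero]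

lemma toSphere_real_halfLune (hE : Module.finrank ℝ E = 3) {a a' : E} {η θ : ℝ} (ha : ‖a‖ = 1)
    (ha' : ‖a'‖ = 1) (hη : η ∈ Ioo 0 (π / 2)) (haa' : ⟪a, a'⟫ = cos (2 * η))
    (hθ : θ ∈ Icc η (π - η)) :
    (volume : Measure E).toSphere.real ({y | cos θ ≤ ⟪a, (y : E)⟫} ∩
      {y | ⟪a, (y : E)⟫ ≤ ⟪a', (y : E)⟫}) = halfLuneArea η θ := by
  have hsin : 0 < sin η := sin_pos_of_mem_Ioo ⟨hη.1, by linarith [hη.2, pi_pos]⟩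
  have hcos : 0 < cos η := cos_pos_of_mem_Ioo ⟨by linarith [hη.1, pi_pos], hη.2⟩
  have hsin2 : sin (2 * η) ≠ 0 := by rw [sin_two_mul]; positivity
  obtain ⟨b, rfl, rfl⟩ := exists_orthonormalBasis_eq_cos_smul_add_sin_smul hE ha ha' hsin2 haa'
  have bisector_iff (y : E) : ⟪b 0, y⟫ ≤ ⟪cos (2 * η) • b 0 + sin (2 * η) • b 1, y⟫ ↔
      sin η * ⟪b 0, y⟫ ≤ cos η * ⟪b 1, y⟫ := by
    have sub_eq : ⟪cos (2 * η) • b 0 + sin (2 * η) • b 1, y⟫ - ⟪b 0, y⟫ =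
        2 * sin η * (cos η * ⟪b 1, y⟫ - sin η * ⟪b 0, y⟫) := by
      rw [inner_add_left, real_inner_smul_left, real_inner_smul_left, cos_two_mul, sin_two_mul]
      linear_combination 2 * ⟪b 0, y⟫ * sin_sq_add_cos_sq η
    rw [← sub_nonneg, sub_eq, mul_nonneg_iff_of_pos_left (by positivity), sub_nonneg]
  simp only [bisector_iff]
  rw [toSphere_real_halfLune_eq_integral b hcos ⟨hη.1.le.trans hθ.1, by linarith [hη.1, hθ.2]⟩,
    integral_sin_mul_arccos_eq_halfLuneArea hη hθ]

lemma toSphere_real_lune (hE : Module.finrank ℝ E = 3) {a a' : E} {η θ : ℝ} (ha : ‖a‖ = 1)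
    (ha' : ‖a'‖ = 1) (hη : η ∈ Ioo 0 (π / 2)) (haa' : ⟪a, a'⟫ = cos (2 * η))
    (hθ : θ ∈ Icc η (π - η)) :
    (volume : Measure E).toSphere.real ({y | cos θ ≤ ⟪a, (y : E)⟫} ∩ {y | cos θ ≤ ⟪a', (y : E)⟫}) =
      2 * halfLuneArea η θ := by
  set halfLune : E → E → Set (sphere (0 : E) 1) := fun u v ↦
    {y | cos θ ≤ ⟪u, (y : E)⟫} ∩ {y | ⟪u, (y : E)⟫ ≤ ⟪v, (y : E)⟫}
  have measurable_halfLune (u v : E) : MeasurableSet (halfLune u v) :=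
    (measurableSet_le (by fun_prop) (by fun_prop)).inter
      (measurableSet_le (by fun_prop) (by fun_prop))
  have lune_eq : {y : sphere (0 : E) 1 | cos θ ≤ ⟪a, (y : E)⟫} ∩ {y | cos θ ≤ ⟪a', (y : E)⟫} =
      halfLune a a' ∪ halfLune a' a := by
    ext y
    simp only [halfLune, mem_inter_iff, mem_union, mem_ofPred_eq]
    grind
  have hne : a - a' ≠ 0 := by
    rw [sub_ne_zero]
    rintro rfl
    have hcos : cos (2 * η) < cos 0 :=
      cos_lt_cos_of_nonneg_of_le_pi le_rfl (by linarith [hη.2]) (by linarith [hη.1])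
    rw [← haa', real_inner_self_eq_norm_sq, ha, one_pow, cos_zero] at hcos
    exact hcos.false
  have aedisjoint : AEDisjoint (volume : Measure E).toSphere (halfLune a a') (halfLune a' a) := by
    refine measure_mono_null (fun y hy ↦ ?_) (toSphere_setOf_inner_eq_zero hne)
    rw [mem_ofPred_eq, inner_sub_left, sub_eq_zero]
    exact le_antisymm hy.1.2 hy.2.2
  rw [lune_eq, measureReal_union₀ (measurable_halfLune a' a).nullMeasurableSet aedisjoint,
    toSphere_real_halfLune hE ha ha' hη haa' hθ,
    toSphere_real_halfLune hE ha' ha hη ((real_inner_comm a a').trans haa') hθ]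
  ring

end Lunes

section InclusionExclusion

variable {ι X : Type*}

lemma sum_offDiag_insert [DecidableEq ι] {s : Finset ι} {a : ι} (ha : a ∉ s) {f : ι → ι → ℝ}
    (hf : ∀ i j, f i j = f j i) :
    ∑ p ∈ (insert a s).offDiag, f p.1 p.2 = ∑ p ∈ s.offDiag, f p.1 p.2 + 2 * ∑ i ∈ s, f a i := by
  rw [Finset.offDiag_insert ha, Finset.sum_union, Finset.sum_union, Finset.sum_product,
    Finset.sum_product_right, Finset.sum_singleton, Finset.sum_singleton]
  · simp only [hf _ a]
    ring
  · grind [Finset.disjoint_left]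
  · grind [Finset.disjoint_left]

lemma measureReal_biUnion_finset_of_disjoint_inter [MeasurableSpace X] (μ : Measure X)
    [IsFiniteMeasure μ] {A : ι → Set X} (hA : ∀ i, MeasurableSet (A i))
    (hdisj : ∀ i j k, i ≠ j → i ≠ k → j ≠ k → Disjoint (A i ∩ A j) (A k)) (s : Finset ι) :
    μ.real (⋃ i ∈ s, A i) =
      ∑ i ∈ s, μ.real (A i) - (∑ p ∈ s.offDiag, μ.real (A p.1 ∩ A p.2)) / 2 := by
  classical
  induction s using Finset.induction_on with
  | empty => simp
  | insert a s ha ih =>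
    have inter_eq : μ.real (A a ∩ ⋃ i ∈ s, A i) = ∑ i ∈ s, μ.real (A a ∩ A i) := by
      rw [inter_iUnion₂]
      refine measureReal_biUnion_finset (fun i hi j hj hij ↦ ?_) fun i _ ↦ (hA a).inter (hA i)
      exact (hdisj a i j (ne_of_mem_of_not_mem hi ha).symm (ne_of_mem_of_not_mem hj ha).symm
        hij).mono_right inter_subset_right
    have union_add_inter := measureReal_union_add_inter (μ := μ) (s := A a)
      (s.measurableSet_biUnion fun i _ ↦ hA i) (measure_ne_top _ _) (measure_ne_top _ _)
    rw [Finset.set_biUnion_insert, Finset.sum_insert ha,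
      sum_offDiag_insert ha (f := fun i j ↦ μ.real (A i ∩ A j))
        fun i j ↦ by rw [inter_comm]]
    linarith

end InclusionExclusion

section Tetrahedron

lemma arccos_two_mul_sq_sub_one {x : ℝ} (hx : x ∈ Icc 0 1) :
    arccos (2 * x ^ 2 - 1) = 2 * arccos x := by
  rw [← arccos_cos (x := 2 * arccos x) (by linarith [arccos_nonneg x])
    (by linarith [arccos_le_pi_div_two.2 hx.1]), cos_two_mul, cos_arccos (by linarith [hx.1]) hx.2]

lemma two_mul_halfLuneArea {η θ : ℝ} (hη : 0 ≤ sin η) (hθ : 0 < sin θ) (hηθ : sin η ≤ sin θ) :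
    2 * halfLuneArea η θ = 2 * (π - arccos ((cos (2 * η) - cos θ ^ 2) / sin θ ^ 2) -
      2 * arccos (tan η * (cos θ / sin θ)) * cos θ) := by
  have div_eq : (cos (2 * η) - cos θ ^ 2) / sin θ ^ 2 = -(2 * (sin η / sin θ) ^ 2 - 1) := by
    rw [cos_two_mul]
    field_simp
    linear_combination 2 * sin_sq_add_cos_sq η - sin_sq_add_cos_sq θ
  rw [halfLuneArea, div_eq, arccos_neg,
    arccos_two_mul_sq_sub_one ⟨by positivity, (div_le_one hθ).2 hηθ⟩]
  ring

lemma cos_two_mul_arccos_neg_third_div_two : cos (2 * (arccos (-(1 / 3)) / 2)) = -(1 / 3) := by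
  rw [mul_div_cancel₀ _ two_ne_zero, cos_arccos (by norm_num) (by norm_num)]

lemma arccos_neg_third_div_two_mem_Ioo : arccos (-(1 / 3)) / 2 ∈ Ioo 0 (π / 2) := by
  have hpos : 0 < arccos (-(1 / 3)) := arccos_pos.2 (by norm_num)
  have hlt : arccos (-(1 / 3)) < π := arccos_lt_pi.2 (by norm_num)
  constructor <;> linarith

lemma tan_arccos_neg_third_div_two : tan (arccos (-(1 / 3)) / 2) = √2 := by
  have h0 := arccos_nonneg (-(1 / 3))
  have hπ := arccos_le_pi (-(1 / 3))
  rw [tan_eq_sin_div_cos, sin_half_eq_sqrt h0 (by linarith), cos_half (by linarith) hπ,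
    cos_arccos (by norm_num) (by norm_num), ← sqrt_div (by norm_num)]
  norm_num

lemma two_mul_halfLuneArea_eq_luneArea {θ : ℝ} (hθ : θ ∈ Icc (arccos (-(1 / 3)) / 2) (π / 2)) :
    2 * halfLuneArea (arccos (-(1 / 3)) / 2) θ = 4 * π * luneArea θ := by
  obtain ⟨hη₀, hηπ⟩ := arccos_neg_third_div_two_mem_Ioo
  have hsinη : 0 < sin (arccos (-(1 / 3)) / 2) := sin_pos_of_mem_Ioo ⟨hη₀, by linarith⟩
  have hsinηθ : sin (arccos (-(1 / 3)) / 2) ≤ sin θ :=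
    sin_le_sin_of_le_of_le_pi_div_two (by linarith) hθ.2 hθ.1
  rw [two_mul_halfLuneArea hsinη.le (hsinη.trans_le hsinηθ) hsinηθ,
    cos_two_mul_arccos_neg_third_div_two, tan_arccos_neg_third_div_two, luneArea]
  field_simp
  ring

lemma norm_add_add_eq_one_of_inner_eq_neg_third {E : Type*} [NormedAddCommGroup E]
    [InnerProductSpace ℝ E] {u v w : E} (hu : ‖u‖ = 1) (hv : ‖v‖ = 1) (hw : ‖w‖ = 1)
    (huv : ⟪u, v⟫ = -(1 / 3)) (huw : ⟪u, w⟫ = -(1 / 3)) (hvw : ⟪v, w⟫ = -(1 / 3)) :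
    ‖u + v + w‖ = 1 := by
  rw [← pow_eq_one_iff_of_nonneg (norm_nonneg _) two_ne_zero, norm_add_sq_real, norm_add_sq_real,
    inner_add_left, hu, hv, hw, huv, huw, hvw]
  norm_num

lemma disjoint_caps_of_norm_add_add_lt {E : Type*} [NormedAddCommGroup E] [InnerProductSpace ℝ E]
    {u v w : E} {c : ℝ} (hc : ‖u + v + w‖ < 3 * c) :
    Disjoint ({y : sphere (0 : E) 1 | c ≤ ⟪u, (y : E)⟫} ∩ {y | c ≤ ⟪v, (y : E)⟫})
      {y | c ≤ ⟪w, (y : E)⟫} := by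
  rw [Set.disjoint_left]
  rintro y ⟨hu : c ≤ ⟪u, (y : E)⟫, hv : c ≤ ⟪v, (y : E)⟫⟩ (hw : c ≤ ⟪w, (y : E)⟫)
  have inner_le : ⟪u + v + w, (y : E)⟫ ≤ ‖u + v + w‖ := by
    simpa using real_inner_le_norm (u + v + w) (y : E)
  rw [inner_add_left, inner_add_left] at inner_le
  linarith

lemma measurableSet_closedCap (ξ : EuclideanSpace ℝ (Fin 3)) (θ : ℝ) :
    MeasurableSet (closedCap ξ θ) :=
  measurableSet_le measurable_const (by fun_prop)

lemma toSphere_real_closedCap {ξ : EuclideanSpace ℝ (Fin 3)} (hξ : ‖ξ‖ = 1) {θ : ℝ}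
    (hθ : θ ∈ Icc 0 π) : volume.toSphere.real (closedCap ξ θ) = 2 * π * (1 - cos θ) := by
  obtain ⟨b, rfl⟩ := exists_orthonormalBasis_zero_eq finrank_euclideanSpace_fin hξ
  exact toSphere_real_cap b hθ

lemma toSphere_real_closedCap_inter_closedCap {ξ ζ : EuclideanSpace ℝ (Fin 3)} (hξ : ‖ξ‖ = 1)
    (hζ : ‖ζ‖ = 1) (hξζ : ⟪ξ, ζ⟫ = -(1 / 3)) {θ : ℝ}
    (hθ : θ ∈ Icc (arccos (-(1 / 3)) / 2) (π / 2)) :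
    volume.toSphere.real (closedCap ξ θ ∩ closedCap ζ θ) = 4 * π * luneArea θ := by
  have hη := arccos_neg_third_div_two_mem_Ioo
  rw [← two_mul_halfLuneArea_eq_luneArea hθ]
  exact toSphere_real_lune finrank_euclideanSpace_fin hξ hζ hη
    (hξζ.trans cos_two_mul_arccos_neg_third_div_two.symm) ⟨hθ.1, by linarith [hη.2, hθ.2]⟩

lemma disjoint_closedCap_inter_closedCap {u v w : EuclideanSpace ℝ (Fin 3)} {θ : ℝ}
    (hu : ‖u‖ = 1) (hv : ‖v‖ = 1) (hw : ‖w‖ = 1) (huv : ⟪u, v⟫ = -(1 / 3))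
    (huw : ⟪u, w⟫ = -(1 / 3)) (hvw : ⟪v, w⟫ = -(1 / 3)) (hθ : 1 / 3 < cos θ) :
    Disjoint (closedCap u θ ∩ closedCap v θ) (closedCap w θ) := by
  refine disjoint_caps_of_norm_add_add_lt ?_
  rw [norm_add_add_eq_one_of_inner_eq_neg_third hu hv hw huv huw hvw]
  linarith

lemma toSphere_univ_euclideanSpace_fin_three :
    (volume : Measure (EuclideanSpace ℝ (Fin 3))).toSphere univ = ENNReal.ofReal (4 * π) := by
  rw [Measure.toSphere_apply_univ, finrank_euclideanSpace_fin, EuclideanSpace.volume_ball_fin_three,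
    ENNReal.ofReal_one, one_pow, one_mul, ← ENNReal.ofReal_natCast, ← ENNReal.ofReal_mul (by simp)]
  congr 1
  ring

lemma sphereProb_eq_ofReal (s : Set (sphere (0 : EuclideanSpace ℝ (Fin 3)) 1)) :
    sphereProb s = ENNReal.ofReal (volume.toSphere.real s / (4 * π)) := by
  rw [sphereProb, Measure.smul_apply, toSphere_univ_euclideanSpace_fin_three, smul_eq_mul,
    ENNReal.ofReal_div_of_pos (by positivity), ofReal_measureReal, mul_comm, div_eq_mul_inv]

end Tetrahedron

/-- Let `l₁, …, l₄` be the vertices of a regular tetrahedron inscribed in the unit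
sphere, and for `θ ∈ (0, π/2]` let `C_θ = ⋃ⱼ C[lⱼ, θ]`. If
`(1/2)·arccos(−1/3) ≤ θ < arccos(1/3)`, then `σ(C_θ) = 2(1 − cos θ) − 6·A_θ`. -/
theorem measure_union_caps_middle_radius
    (l : Fin 4 → EuclideanSpace ℝ (Fin 3))
    (hl : ∀ j, ‖l j‖ = 1)
    (hij : ∀ j k, j ≠ k → ⟪l j, l k⟫ = -(1 / 3))
    (θ : ℝ) (hθ₀ : 0 < θ) (hθπ : θ ≤ Real.pi / 2)
    (hθ₁ : Real.arccos (-(1 / 3)) / 2 ≤ θ) (hθ₂ : θ < Real.arccos (1 / 3)) :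
    sphereProb (⋃ j, closedCap (l j) θ) =
      ENNReal.ofReal (2 * (1 - Real.cos θ) - 6 * luneArea θ) := by
  have cap_area (j) : volume.toSphere.real (closedCap (l j) θ) = 2 * π * (1 - cos θ) :=
    toSphere_real_closedCap (hl j) ⟨hθ₀.le, by linarith⟩
  have lune_area : ∀ p ∈ Finset.univ.offDiag,
      volume.toSphere.real (closedCap (l p.1) θ ∩ closedCap (l p.2) θ) = 4 * π * luneArea θ :=
    fun p hp ↦ toSphere_real_closedCap_inter_closedCap (hl p.1) (hl p.2)
      (hij p.1 p.2 (Finset.mem_offDiag.1 hp).2.2) ⟨hθ₁, hθπ⟩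
  have triple_disjoint (i j k) (hne : i ≠ j) (hik : i ≠ k) (hjk : j ≠ k) :
      Disjoint (closedCap (l i) θ ∩ closedCap (l j) θ) (closedCap (l k) θ) :=
    disjoint_closedCap_inter_closedCap (hl i) (hl j) (hl k) (hij i j hne) (hij i k hik)
      (hij j k hjk) (lt_cos_of_lt_arccos hθ₀.le hθ₂)
  have union_area := measureReal_biUnion_finset_of_disjoint_inter volume.toSphere
    (fun j ↦ measurableSet_closedCap (l j) θ) triple_disjoint Finset.univ
  simp only [Finset.mem_univ, iUnion_true, cap_area, Finset.sum_congr rfl lune_area,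
    Finset.sum_const, Finset.offDiag_card, Finset.card_fin, nsmul_eq_mul] at union_area
  rw [sphereProb_eq_ofReal, union_area]
  congr 1
  field_simp
  ring

end
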